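/- arXiv:1912.13142 — 2 statements merged into one kernel-verified Lean document; each statement's English description precedes it below -/
import Mathlib

section
/- For the Weierstrass ℘-function of the square lattice L = [1, i] with e₁ = ℘(1/2), one has 1/(℘(z) + e₁) = (℘(z - i/2) + e₁)/(2e₁²) for all z with z, z - i/2 ∉ L. -/
/-!
Both factors of `F z = (℘ z + e₁) (℘ (z - i/2) + e₁)` have poles only on one coset of `L`.
Since `℘ (i z) = -℘ z`, one has `℘ (i/2) = -e₁`, and `℘'` vanishes at the half period `-i/2`
because it is odd and `L`-periodic; so `℘ (z - i/2) + e₁` has a double zero at `0`, which cancels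
the double pole of `℘ z + e₁`. Moreover `F` is periodic under `1` and under `i/2` (translation by
`i/2` swaps the two factors), so `F` extends to an entire function that is periodic under the
lattice `[1, i/2]`, and is constant by Liouville.

At `z = 1/2` the value is `2 e₁ (℘ ((1 - i)/2) + e₁) = 2 e₁²`, as `(1 - i)/2` is fixed by
multiplication by `i` modulo `L`, so that `℘` vanishes there. Finally `e₁ ≠ 0`: otherwise
`℘ z * ℘ (z - i/2)` would vanish identically, which is impossible for a meromorphic function
`℘` having a pole.
-/

open Complex

/-- A lattice point of the unit square lattice `L = ℤ + ℤi`. -/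
noncomputable def latticePt (p : ℤ × ℤ) : ℂ := (p.1 : ℂ) + (p.2 : ℂ) * Complex.I

/-- The unit square lattice `L = ℤ + ℤi` as a subset of `ℂ`. -/
def squareLattice : Set ℂ := {z | ∃ m n : ℤ, z = (m : ℂ) + (n : ℂ) * Complex.I}

/-- The Weierstrass ℘-function of the square lattice `L = ℤ + ℤi`. -/
noncomputable def wp (z : ℂ) : ℂ :=
  1 / z ^ 2 + ∑' p : {p : ℤ × ℤ // p ≠ 0},
    (1 / (z - latticePt p.1) ^ 2 - 1 / (latticePt p.1) ^ 2)

/-- The Weierstrass ζ-function of the square lattice `L = ℤ + ℤi`. -/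
noncomputable def wzeta (z : ℂ) : ℂ :=
  1 / z + ∑' p : {p : ℤ × ℤ // p ≠ 0},
    (1 / (z - latticePt p.1) + 1 / latticePt p.1 + z / (latticePt p.1) ^ 2)

/-- The invariant `g₂ = 60 Σ' Ω⁻⁴` of the square lattice. -/
noncomputable def g2 : ℂ := 60 * ∑' p : {p : ℤ × ℤ // p ≠ 0}, (latticePt p.1) ^ (-4 : ℤ)

/-- The invariant `g₃ = 140 Σ' Ω⁻⁶` of the square lattice. -/
noncomputable def g3 : ℂ := 140 * ∑' p : {p : ℤ × ℤ // p ≠ 0}, (latticePt p.1) ^ (-6 : ℤ)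

open Filter Topology

namespace SquareWP

lemma indep_one_mul_I {c : ℝ} (hc : c ≠ 0) :
    LinearIndependent ℝ ![(1 : ℂ), (c : ℂ) * Complex.I] := by
  rw [LinearIndependent.pair_iff]
  intro s t h
  have h1 := congrArg Complex.re h
  have h2 := congrArg Complex.im h
  simp at h1 h2
  exact ⟨h1, h2.resolve_right hc⟩

/-- The periods `1, i` of the square lattice. -/
noncomputable def Lsq : PeriodPair where
  ω₁ := 1
  ω₂ := Complex.I
  indep := by simpa using indep_one_mul_I (c := 1) one_ne_zero

/-- The periods `1, i/2`, spanning the lattice `L ∪ (i/2 + L)`. -/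
noncomputable def Lhalf : PeriodPair where
  ω₁ := 1
  ω₂ := Complex.I / 2
  indep := by
    have := indep_one_mul_I (c := 1 / 2) (by norm_num)
    convert this using 3
    push_cast; ring

/-- The Weierstrass function of `L`, in Mathlib's form. -/
local notation "P" => PeriodPair.weierstrassP Lsq

lemma mem_sq {z : ℂ} : z ∈ Lsq.lattice ↔ z ∈ squareLattice := by
  rw [PeriodPair.mem_lattice]
  simp [squareLattice, Lsq, eq_comm]

lemma mem_half {z : ℂ} : z ∈ Lhalf.lattice ↔ z ∈ Lsq.lattice ∨ z - Complex.I / 2 ∈ Lsq.lattice := by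
  simp only [PeriodPair.mem_lattice, Lsq, Lhalf]
  constructor
  · rintro ⟨m, n, rfl⟩
    obtain ⟨k, rfl | rfl⟩ := Int.even_or_odd' n
    · exact Or.inl ⟨m, k, by push_cast; ring⟩
    · exact Or.inr ⟨m, k, by push_cast; ring⟩
  · rintro (⟨m, n, h⟩ | ⟨m, n, h⟩)
    · exact ⟨m, 2 * n, by rw [← h]; push_cast; ring⟩
    · exact ⟨m, 2 * n + 1, by push_cast; linear_combination h⟩

lemma P_eq_tsum (z : ℂ) :
    P z = ∑' p : ℤ × ℤ, (1 / (z - latticePt p) ^ 2 - 1 / latticePt p ^ 2) := by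
  rw [PeriodPair.weierstrassP, ← Lsq.latticeEquivProd.symm.toEquiv.tsum_eq]
  refine tsum_congr fun p ↦ ?_
  have : ((Lsq.latticeEquivProd.symm p : Lsq.lattice) : ℂ) = latticePt p := by
    rw [PeriodPair.latticeEquiv_symm_apply]
    simp [latticePt, Lsq]
  simp only [LinearEquiv.coe_toEquiv, this]

lemma summable_P (z : ℂ) :
    Summable fun p : ℤ × ℤ ↦ (1 / (z - latticePt p) ^ 2 - 1 / latticePt p ^ 2) := by
  rw [← Lsq.latticeEquivProd.toEquiv.summable_iff]
  refine (Lsq.hasSum_weierstrassP z).summable.congr fun l ↦ ?_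
  have : latticePt (Lsq.latticeEquivProd l) = l := by
    have := Lsq.latticeEquiv_symm_apply (Lsq.latticeEquivProd l)
    rw [LinearEquiv.symm_apply_apply] at this
    rw [this]
    simp [latticePt, Lsq]
  simp [this]

lemma wp_eq (z : ℂ) : wp z = P z := by
  rw [P_eq_tsum, (summable_P z).tsum_eq_add_tsum_ite 0, wp]
  congr 1
  · simp [latticePt]
  · rw [← tsum_subtype_eq_of_support_subset (s := {p : ℤ × ℤ | p ≠ 0})]
    · refine tsum_congr fun p ↦ ?_
      rw [if_neg p.2]
    · intro p hp h
      simp [h] at hp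

lemma P_I_mul (z : ℂ) : P (Complex.I * z) = -P z := by
  let rot : ℤ × ℤ ≃ ℤ × ℤ :=
    ⟨fun p ↦ (-p.2, p.1), fun p ↦ (p.2, -p.1), fun p ↦ by simp, fun p ↦ by simp⟩
  rw [P_eq_tsum, P_eq_tsum, ← rot.tsum_eq, ← tsum_neg]
  refine tsum_congr fun p ↦ ?_
  have : latticePt (rot p) = Complex.I * latticePt p := by
    simp only [latticePt, rot, Equiv.coe_fn_mk]
    push_cast
    linear_combination (-(p.2 : ℂ)) * Complex.I_mul_I
  rw [this, ← mul_sub, mul_pow, mul_pow, Complex.I_sq]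
  simp only [neg_one_mul, one_div, inv_neg]
  ring

lemma I_mem : Complex.I ∈ Lsq.lattice := Lsq.ω₂_mem_lattice

lemma one_mem : (1 : ℂ) ∈ Lsq.lattice := Lsq.ω₁_mem_lattice

lemma P_add_I (z : ℂ) : P (z + Complex.I) = P z := Lsq.weierstrassP_add_coe z ⟨_, I_mem⟩

lemma P_add_one (z : ℂ) : P (z + 1) = P z := Lsq.weierstrassP_add_coe z ⟨_, one_mem⟩

lemma P_half_I : P (-(Complex.I / 2)) = -P (1 / 2) := by
  rw [PeriodPair.weierstrassP_neg, ← P_I_mul]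
  congr 1; ring

lemma P_center : P (1 / 2 - Complex.I / 2) = 0 := by
  have h := P_I_mul (1 / 2 - Complex.I / 2)
  have h2 : Complex.I * (1 / 2 - Complex.I / 2) = (1 / 2 - Complex.I / 2) + Complex.I := by
    linear_combination (-1 / 2 : ℂ) * Complex.I_mul_I
  rw [h2, P_add_I] at h
  linear_combination h / 2

lemma half_I_notMem : -(Complex.I / 2) ∉ Lsq.lattice := by
  rw [neg_mem_iff]
  exact Lsq.ω₂_div_two_notMem_lattice

lemma half_notMem : (1 / 2 : ℂ) ∉ Lhalf.lattice := by
  have : (1 / 2 : ℂ) = Lhalf.ω₁ / 2 := by simp [Lhalf]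
  rw [this]
  exact Lhalf.ω₁_div_two_notMem_lattice

lemma deriv_P_half_I : deriv P (-(Complex.I / 2)) = 0 := by
  rw [PeriodPair.deriv_weierstrassP]
  have h := Lsq.derivWeierstrassP_add_coe (-(Complex.I / 2)) ⟨_, I_mem⟩
  have h2 : -(Complex.I / 2) + Complex.I = -(-(Complex.I / 2)) := by ring
  rw [h2, Lsq.derivWeierstrassP_neg (-(Complex.I / 2))] at h
  linear_combination -h / 2

/-- The second factor `℘ (z - i/2) + e₁`. -/
noncomputable def g (z : ℂ) : ℂ := P (z - Complex.I / 2) + P (1 / 2)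

lemma analyticAt_g {z : ℂ} (hz : z - Complex.I / 2 ∉ Lsq.lattice) : AnalyticAt ℂ g z := by
  have h : AnalyticAt ℂ P (z - Complex.I / 2) := Lsq.analyticOnNhd_weierstrassP _ hz
  have h2 : AnalyticAt ℂ (fun z : ℂ ↦ z - Complex.I / 2) z := by fun_prop
  exact (AnalyticAt.fun_comp_of_eq h h2 rfl).add analyticAt_const

lemma g_zero : g 0 = 0 := by
  rw [g, zero_sub, P_half_I, neg_add_cancel]

lemma deriv_g_zero : deriv g 0 = 0 := by
  unfold g
  rw [deriv_add_const, deriv_comp_sub_const, zero_sub, deriv_P_half_I]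

/-- The quotient `g z / z²`, continued over the double zero of `g` at `0`. -/
noncomputable def k : ℂ → ℂ := dslope (dslope g 0) 0

lemma g_eq (z : ℂ) : g z = z ^ 2 * k z := by
  have h1 := sub_smul_dslope g 0 z
  have h2 := sub_smul_dslope (dslope g 0) 0 z
  simp only [dslope_same, deriv_g_zero, g_zero, sub_zero, smul_eq_mul] at h1 h2
  rw [← h1, ← h2, k]; ring

lemma analyticAt_k : AnalyticAt ℂ k 0 := by
  obtain ⟨p, hp⟩ := analyticAt_g (z := 0) (by simpa using half_I_notMem)
  exact ⟨_, hp.has_fpower_series_dslope_fslope.has_fpower_series_dslope_fslope⟩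

open Classical in
/-- The product `(℘ z + e₁) (℘ (z - i/2) + e₁)`, with its removable singularities, which form
the lattice `[1, i/2]`, filled in by the limit at `0`. -/
noncomputable def H (z : ℂ) : ℂ :=
  if z ∈ Lhalf.lattice then k 0 else (P z + P (1 / 2)) * g z

lemma periodic_H_one : Function.Periodic H 1 := fun z ↦ by
  have h : z + 1 ∈ Lhalf.lattice ↔ z ∈ Lhalf.lattice :=
    Lhalf.lattice.add_mem_iff_left Lhalf.ω₁_mem_lattice
  have h2 : z + 1 - Complex.I / 2 = z - Complex.I / 2 + 1 := by ring
  by_cases hz : z ∈ Lhalf.lattice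
  · rw [H, H, if_pos (h.2 hz), if_pos hz]
  · rw [H, H, if_neg (mt h.1 hz), if_neg hz, g, g, h2, P_add_one, P_add_one]

lemma periodic_H_half : Function.Periodic H (Complex.I / 2) := fun z ↦ by
  have h : z + Complex.I / 2 ∈ Lhalf.lattice ↔ z ∈ Lhalf.lattice :=
    Lhalf.lattice.add_mem_iff_left Lhalf.ω₂_mem_lattice
  have h2 : z + Complex.I / 2 = z - Complex.I / 2 + Complex.I := by ring
  have h3 : P (z + Complex.I / 2) = P (z - Complex.I / 2) := by rw [h2, P_add_I]
  by_cases hz : z ∈ Lhalf.lattice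
  · rw [H, H, if_pos (h.2 hz), if_pos hz]
  · rw [H, H, if_neg (mt h.1 hz), if_neg hz, g, g, add_sub_cancel_right, h3]
    ring

lemma periodic_H {l : ℂ} (hl : l ∈ Lhalf.lattice) : Function.Periodic H l := by
  obtain ⟨m, n, rfl⟩ := PeriodPair.mem_lattice.1 hl
  have h1 := periodic_H_one.zsmul m
  have h2 := periodic_H_half.zsmul n
  rw [zsmul_eq_mul] at h1 h2
  exact h1.add_period h2

lemma analyticAt_H_zero : AnalyticAt ℂ H 0 := by
  have h1 := analyticAt_k
  have h2 : AnalyticAt ℂ (PeriodPair.weierstrassPExcept Lsq 0) 0 :=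
    Lsq.analyticAt_weierstrassPExcept 0
  have h3 : AnalyticAt ℂ (fun z ↦
      k z * (1 + z ^ 2 * (PeriodPair.weierstrassPExcept Lsq 0 z + P (1 / 2)))) 0 := by
    fun_prop
  refine h3.congr ?_
  filter_upwards [Lhalf.compl_lattice_sdiff_singleton_mem_nhds 0] with z hz
  by_cases hz0 : z = 0
  · subst hz0
    simp [H]
  · have hz' : z ∉ Lhalf.lattice := fun h ↦ hz ⟨h, hz0⟩
    have hP : PeriodPair.weierstrassPExcept Lsq 0 z + 1 / z ^ 2 = P z := by
      have := Lsq.weierstrassPExcept_add 0 z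
      simpa using this
    rw [H, if_neg hz', g_eq, ← hP]
    field_simp
    ring

lemma analyticAt_H (z : ℂ) : AnalyticAt ℂ H z := by
  by_cases hz : z ∈ Lhalf.lattice
  · have h := analyticAt_H_zero
    rw [← sub_self z] at h
    have h2 := h.fun_comp (f := fun w ↦ w - z) (by fun_prop)
    refine h2.congr (Eventually.of_forall fun w ↦ ?_)
    exact (periodic_H hz).sub_eq w
  · have hz' := hz
    rw [mem_half, not_or] at hz'
    have h1 : AnalyticAt ℂ P z := Lsq.analyticOnNhd_weierstrassP _ hz'.1
    refine ((h1.add (analyticAt_const (v := P (1 / 2)))).mul (analyticAt_g hz'.2)).congr ?_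
    filter_upwards [Lhalf.isClosed_lattice.isOpen_compl.mem_nhds hz] with w hw
    have hw' : w ∉ Lhalf.lattice := hw
    simp [H, hw']

/-- Liouville's theorem for `H`, with the constant computed at `z = 1/2`. -/
lemma H_eq (z : ℂ) : H z = 2 * P (1 / 2) ^ 2 := by
  have hd : Differentiable ℂ H := fun x ↦ (analyticAt_H x).differentiableAt
  have h := hd.apply_eq_apply_of_bounded (IsZLattice.isCompact_range_of_periodic Lhalf.lattice _
    hd.continuous fun z w hw ↦ periodic_H hw z).isBounded z (1 / 2)
  rw [h, H, if_neg half_notMem, g, P_center]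
  ring

lemma P_half_ne_zero : P (1 / 2) ≠ 0 := by
  intro h0
  have hord : ∀ x, meromorphicOrderAt P x ≠ ⊤ := by
    refine Lsq.meromorphic_weierstrassP.exists_meromorphicOrderAt_ne_top_iff_forall.1 ⟨0, ?_⟩
    rw [Lsq.order_weierstrassP 0 (zero_mem _)]
    exact WithTop.coe_ne_top (a := (-2 : ℤ))
  have hne : ∀ x, ∀ᶠ z in 𝓝[≠] x, P z ≠ 0 := fun x ↦
    (meromorphicOrderAt_ne_top_iff_eventually_ne_zero (Lsq.meromorphic_weierstrassP x)).1 (hord x)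
  have hshift : Tendsto (fun z : ℂ ↦ z - Complex.I / 2) (𝓝[≠] 0) (𝓝[≠] (0 - Complex.I / 2)) := by
    refine tendsto_nhdsWithin_of_tendsto_nhds_of_eventually_within _ ?_ ?_
    · exact ((continuous_id.sub continuous_const).tendsto 0).mono_left nhdsWithin_le_nhds
    · filter_upwards [self_mem_nhdsWithin] with z hz
      simpa using hz
  obtain ⟨z, hz1, hz2, hz3, hz4⟩ := ((hne 0).and ((hshift.eventually (hne _)).and
    ((eventually_nhdsWithin_of_eventually_nhds
      (Lhalf.compl_lattice_sdiff_singleton_mem_nhds 0)).and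
      self_mem_nhdsWithin))).exists
  have hz : z ∉ Lhalf.lattice := fun h ↦ hz3 ⟨h, hz4⟩
  have := H_eq z
  rw [H, if_neg hz, g, h0] at this
  simp [hz1, hz2] at this

end SquareWP

/-- 1/(wp z + e1) = (wp(z - i/2) + e1)/(2 e1^2) for the square lattice. -/
theorem inv_wp_add_e1 (z : ℂ) (hz : z ∉ squareLattice)
    (hz' : z - Complex.I / 2 ∉ squareLattice) :
    1 / (wp z + wp (1 / 2)) =
      (wp (z - Complex.I / 2) + wp (1 / 2)) / (2 * (wp (1 / 2)) ^ 2) := by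
  have hL : z ∉ SquareWP.Lhalf.lattice := by
    rw [SquareWP.mem_half, SquareWP.mem_sq, SquareWP.mem_sq]
    tauto
  have h := SquareWP.H_eq z
  have h0 := SquareWP.P_half_ne_zero
  rw [SquareWP.H, if_neg hL, SquareWP.g] at h
  simp only [SquareWP.wp_eq]
  have hne : (2 : ℂ) * PeriodPair.weierstrassP SquareWP.Lsq (1 / 2) ^ 2 ≠ 0 :=
    mul_ne_zero two_ne_zero (pow_ne_zero 2 h0)
  rw [div_eq_div_iff (left_ne_zero_of_mul (h ▸ hne)) hne, one_mul, ← h]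
  ring
end

section
/- Let ℘ be the Weierstrass ℘-function of the square lattice L = [1, i] and α(t) = i/3 + t, t ∈ [0,1]. Then ∫_α ℘(z) dz = -π. -/
/-!
Integrating the series of `℘` term by term along the segment from `i/3` to `i/3 + 1` gives
`∑_ω (1 / (i/3 - ω) - 1 / (i/3 + 1 - ω) - 1 / ω²)`, with the convention `1 / 0² = 0`. This series
converges absolutely, so it may be summed one horizontal row `{m + n i : m ∈ ℤ}` at a time. In a
row the first two terms telescope to `0`, and what remains is `-∑_m 1 / (m + n i)²`. Hence the
integral is `-∑_n ∑_m 1 / (m + n i)² = -G₂(i)`. The quasi-modular transformation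
`G₂(z) = z⁻² G₂(-1/z) + 2πi / z`, at the fixed point `z = i`, reads `G₂(i) = -G₂(i) + 2π`, so
`G₂(i) = π`. This is the Legendre relation for the square lattice in the language of Eisenstein
series.
-/

open Complex

open EisensteinSeries SummationFilter Filter Topology

/-- The value of `G₂` at the fixed point `i` of `z ↦ -1/z`, from its quasi-modularity. -/
lemma G2_I : G2 UpperHalfPlane.I = (Real.pi : ℂ) := by
  have h := G2_S_transform UpperHalfPlane.I
  have hS : ModularGroup.S • UpperHalfPlane.I = UpperHalfPlane.I := by
    ext
    rw [UpperHalfPlane.modular_S_smul]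
    simp [UpperHalfPlane.coe_I]
  rw [hS] at h
  simp only [UpperHalfPlane.coe_I, I_sq] at h
  have h2 : -2 * (Real.pi : ℂ) * I / I = -2 * Real.pi := by
    field_simp
  rw [h2] at h
  norm_num at h
  linear_combination h / 2

/-- The summand of `℘` at the lattice point of index `p`. At `p = 0` it is `1 / z ^ 2`, because
`1 / 0 = 0`; this lets `℘` be written as one sum over all of `ℤ × ℤ`. -/
noncomputable def wpTerm (p : ℤ × ℤ) (z : ℂ) : ℂ :=
  1 / (z - latticePt p) ^ 2 - 1 / (latticePt p) ^ 2

lemma summable_norm_latticePt_rpow :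
    Summable fun p : ℤ × ℤ => ‖latticePt p‖ ^ (-3 : ℝ) := by
  have h := (summable_prod_eisSummand (k := 3) le_rfl UpperHalfPlane.I).norm.prod_symm
  refine h.congr fun p => ?_
  simp only [Prod.fst_swap, Prod.snd_swap, eisSummand, latticePt, UpperHalfPlane.coe_I,
    Matrix.cons_val_zero, Matrix.cons_val_one, norm_zpow]
  rw [add_comm, ← Real.rpow_intCast]
  norm_num

lemma eventually_four_le_norm_latticePt :
    ∀ᶠ p : ℤ × ℤ in cofinite, 4 ≤ ‖latticePt p‖ := by
  have h := summable_norm_latticePt_rpow.tendsto_cofinite_zero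
  -- `‖ω‖ ^ (-3) < 4 ^ (-3)` forces `4 < ‖ω‖` unless `ω = 0`, where `0 ^ (-3) = 0`.
  have h1 := h.eventually (gt_mem_nhds (show (0 : ℝ) < 1 / 64 by norm_num))
  filter_upwards [h1, eventually_cofinite_ne (0 : ℤ × ℤ)] with p hp hp0
  have hne : latticePt p ≠ 0 := by
    intro h0
    apply hp0
    have hre := congrArg Complex.re h0
    have him := congrArg Complex.im h0
    simp [latticePt] at hre him
    ext <;> simp [hre, him]
  have hpos : 0 < ‖latticePt p‖ := norm_pos_iff.mpr hne
  by_contra! hlt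
  have : (4 : ℝ) ^ (-3 : ℝ) ≤ ‖latticePt p‖ ^ (-3 : ℝ) :=
    Real.rpow_le_rpow_of_nonpos hpos hlt.le (by norm_num)
  have h4 : (4 : ℝ) ^ (-3 : ℝ) = 1 / 64 := by
    rw [show (-3 : ℝ) = ((-3 : ℤ) : ℝ) by norm_num, Real.rpow_intCast]
    norm_num
  rw [h4] at this
  exact this.not_gt hp

/-- The cubic decay that makes the series for `℘` converge uniformly on the path. The finitely many
exceptional `p` include those for which `latticePt p` may be a pole in the disc. -/
lemma eventually_norm_wpTerm_le :
    ∀ᶠ p : ℤ × ℤ in cofinite, ∀ z : ℂ, ‖z‖ < 2 →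
      ‖wpTerm p z‖ ≤ 20 * ‖latticePt p‖ ^ (-3 : ℝ) := by
  filter_upwards [eventually_four_le_norm_latticePt] with p hp z hz
  have := PeriodPair.weierstrassP_bound 2 (by norm_num) z hz (latticePt p) (by linarith)
  norm_num at this ⊢
  simpa [wpTerm] using this

lemma norm_path_lt {t : ℝ} (ht : t ∈ Set.Icc (0 : ℝ) 1) : ‖I / 3 + (t : ℂ)‖ < 2 := by
  refine (norm_add_le _ _).trans_lt ?_
  rw [norm_div, norm_I, Complex.norm_real, Real.norm_of_nonneg ht.1]
  have := ht.2
  norm_num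
  linarith

/-- The path avoids the lattice: its points have imaginary part `1/3`. -/
lemma path_sub_ne_zero (p : ℤ × ℤ) (t : ℝ) : I / 3 + (t : ℂ) - latticePt p ≠ 0 := by
  intro h
  have him := congrArg Complex.im h
  simp [latticePt] at him
  have h3 : ((3 * p.2 : ℤ) : ℝ) = ((1 : ℤ) : ℝ) := by
    push_cast
    linarith
  have := Int.cast_injective h3
  omega

lemma continuous_wpTerm_path (p : ℤ × ℤ) :
    Continuous fun t : ℝ => wpTerm p (I / 3 + t) := by
  unfold wpTerm
  refine Continuous.sub (Continuous.div continuous_const (by fun_prop) fun t => ?_)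
    continuous_const
  exact pow_ne_zero 2 (path_sub_ne_zero p t)

lemma wp_eq_tsum {z : ℂ} (hz : ‖z‖ < 2) : wp z = ∑' p, wpTerm p z := by
  have hs : Summable fun p => wpTerm p z :=
    (summable_norm_latticePt_rpow.mul_left 20).of_norm_bounded_eventually
      (eventually_norm_wpTerm_le.mono fun p hp => hp z hz)
  rw [← hs.sum_add_tsum_subtype_compl {0}, wp]
  congr 1
  · simp [wpTerm, latticePt]
  · exact (Equiv.subtypeEquivRight fun p => by simp).tsum_eq
      (fun p : {p : ℤ × ℤ // p ∉ ({0} : Finset (ℤ × ℤ))} => wpTerm p z)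

lemma integral_wpTerm (p : ℤ × ℤ) :
    ∫ t in (0 : ℝ)..1, wpTerm p (I / 3 + t) =
      1 / (I / 3 - latticePt p) - 1 / (I / 3 - latticePt p + 1) - 1 / (latticePt p) ^ 2 := by
  have hd : ∀ t ∈ Set.uIcc (0 : ℝ) 1, HasDerivAt
      (fun t : ℝ => -(I / 3 + (t : ℂ) - latticePt p)⁻¹ - t * (1 / (latticePt p) ^ 2))
      (wpTerm p (I / 3 + t)) t := by
    intro t _
    have h0 : HasDerivAt (fun t : ℝ => (t : ℂ)) 1 t := Complex.ofRealCLM.hasDerivAt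
    have h1 := ((h0.const_add (I / 3)).sub_const (latticePt p)).inv (path_sub_ne_zero p t)
    refine (h1.neg.sub (h0.mul_const (1 / (latticePt p) ^ 2))).congr_deriv ?_
    simp [wpTerm, neg_div]
  rw [intervalIntegral.integral_eq_sub_of_hasDerivAt hd
    ((continuous_wpTerm_path p).intervalIntegrable 0 1)]
  simp
  ring

lemma hasSum_integral_wpTerm :
    HasSum (fun p : ℤ × ℤ => ∫ t in (0 : ℝ)..1, wpTerm p (I / 3 + t))
      (∫ t in (0 : ℝ)..1, wp (I / 3 + t)) := by
  have h := intervalIntegral.hasSum_intervalIntegral_of_summable_norm (a := 0) (b := 1)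
    (f := fun p : ℤ × ℤ =>
      (⟨fun t : ℝ => wpTerm p (I / 3 + t), continuous_wpTerm_path p⟩ : C(ℝ, ℂ))) ?_
  · have heq : ∫ t in (0 : ℝ)..1, wp (I / 3 + t) =
        ∫ t in (0 : ℝ)..1, ∑' p, wpTerm p (I / 3 + t) := by
      apply intervalIntegral.integral_congr
      intro t ht
      rw [Set.uIcc_of_le zero_le_one] at ht
      exact wp_eq_tsum (norm_path_lt ht)
    rw [heq]
    exact h
  · refine (summable_norm_latticePt_rpow.mul_left 20).of_norm_bounded_eventually ?_
    filter_upwards [eventually_norm_wpTerm_le] with p hp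
    rw [norm_norm, ContinuousMap.norm_le _ (by positivity)]
    rintro ⟨t, ht⟩
    have ht' : t ∈ Set.uIcc (0 : ℝ) 1 := ht
    rw [Set.uIcc_of_le zero_le_one] at ht'
    exact hp _ (norm_path_lt ht')

/-- The telescoping series `∑ₘ (1 / (w - m) - 1 / (w - m + 1))` over `ℤ`. -/
lemma tsum_telescope (w : ℂ)
    (hs : Summable fun m : ℤ => 1 / (w - m) - 1 / (w - m + 1)) :
    ∑' m : ℤ, (1 / (w - m) - 1 / (w - m + 1)) = 0 := by
  rw [← tsum_eq_of_summable_unconditional (L := symmetricIco ℤ) hs]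
  apply HasSum.tsum_eq
  rw [hasSum_symmetricIco_int_iff]
  have hsum : ∀ N : ℕ, ∑ m ∈ Finset.Ico (-N : ℤ) N, (1 / (w - m) - 1 / (w - m + 1)) =
      1 / (w + 1 - N) - 1 / (w + 1 + N) := by
    intro N
    have := Finset.sum_Ico_int_sub N (fun n : ℤ => -(1 / (w + 1 - n)))
    push_cast at this
    rw [← sub_eq_zero] at this ⊢
    rw [← this]
    simp only [sub_neg_eq_add, add_sub_add_right_eq_sub]
    have : ∀ m : ℤ, -(1 / (w + 1 - m)) + 1 / (w - m) = 1 / (w - m) - 1 / (w - m + 1) := by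
      intro m
      ring
    simp only [this]
    ring
  simp_rw [hsum]
  have hN : Tendsto (fun N : ℕ => (N : ℂ)) atTop (Bornology.cobounded ℂ) :=
    tendsto_natCast_atTop_cobounded
  have h1 : Tendsto (fun N : ℕ => 1 / (w + 1 + N)) atTop (𝓝 0) := by
    simp only [one_div]
    exact tendsto_inv₀_cobounded.comp ((tendsto_const_add_cobounded (w + 1)).comp hN)
  have h2 : Tendsto (fun N : ℕ => 1 / (w + 1 - N)) atTop (𝓝 0) := by
    simp only [one_div]
    exact tendsto_inv₀_cobounded.comp ((tendsto_const_sub_cobounded (w + 1)).comp hN)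
  simpa using h2.sub h1

/-- A single horizontal row contributes minus the corresponding row of `G₂(i)`: the boundary
values of the primitive `-1 / (z - ω)` telescope along the row. -/
lemma tsum_row (n : ℤ)
    (hs : Summable fun m : ℤ => ∫ t in (0 : ℝ)..1, wpTerm (m, n) (I / 3 + t)) :
    ∑' m : ℤ, ∫ t in (0 : ℝ)..1, wpTerm (m, n) (I / 3 + t) =
      -e2Summand n UpperHalfPlane.I := by
  have he : Summable fun m : ℤ => 1 / (latticePt (m, n)) ^ 2 := by
    refine (e2Summand_summable n UpperHalfPlane.I).congr fun m => ?_
    simp [eisSummand, latticePt, add_comm, zpow_neg]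
  have hev : e2Summand n UpperHalfPlane.I = ∑' m : ℤ, 1 / (latticePt (m, n)) ^ 2 := by
    refine tsum_congr fun m => ?_
    simp [eisSummand, latticePt, add_comm, zpow_neg]
  have hw : ∀ m : ℤ, I / 3 - latticePt (m, n) = (I / 3 - n * I) - m := by
    intro m
    simp [latticePt]
    ring
  simp only [integral_wpTerm, hw] at hs ⊢
  have ht : Summable fun m : ℤ =>
      1 / ((I / 3 - n * I) - m) - 1 / ((I / 3 - n * I) - m + 1) := by
    simpa using hs.add he
  rw [ht.tsum_sub he, tsum_telescope _ ht, hev, zero_sub]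

/-- The integral of wp along the horizontal path alpha(t) = i/3 + t, t in [0,1], is -pi. -/
theorem integral_wp_alpha :
    ∫ t in (0 : ℝ)..1, wp (Complex.I / 3 + t) = -(Real.pi : ℂ) := by
  have h := hasSum_integral_wpTerm
  have hs := h.summable.prod_symm
  rw [← h.tsum_eq, ← (Equiv.prodComm ℤ ℤ).tsum_eq, ← G2_I]
  simp only [Equiv.prodComm_apply]
  have hrow : ∀ n : ℤ, ∑' m : ℤ, ∫ t in (0 : ℝ)..1, wpTerm (Prod.swap (n, m)) (I / 3 + t) =
      -e2Summand n UpperHalfPlane.I :=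
    fun n => tsum_row n (hs.prod_factor n)
  have hse : Summable fun n : ℤ => -e2Summand n UpperHalfPlane.I :=
    hs.prod.congr fun n => (hrow n)
  rw [hs.tsum_prod, tsum_congr hrow, tsum_neg, G2,
    tsum_eq_of_summable_unconditional (L := symmetricIcc ℤ) (by simpa using hse.neg)]
end
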